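/- arXiv:math/0603070 — 4 statements merged into one kernel-verified Lean document; each statement's English description precedes it below -/
import Mathlib

section
/- For all integers m ≥ 0 and l ∈ ℤ, one has S_{m,−l}(q) = S_{m,l}(q) and S̃_{m,−l}(q) = q^{l} · S̃_{m,l}(q), identities in ℤ[q, q⁻¹]. -/
/-!
With `a = m - ν`, `b = m - l - ν` and `c = m - a - b`, the product `C(m,ν)_q C(ν,m-l-ν)_q` is the
`q`-trinomial coefficient with parts `a, b, c`, which is symmetric in `a` and `b`
(`qbinomZ_mul_symm`), and `a - b = l`. The exponent of `q` in `S_{m,l}` is `-b(m-b) - a(m-a)`, also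
symmetric, while in `S̃_{m,l}` it is the same plus `b`. Hence the substitution `ν ↦ ν + l`, which
exchanges `a` and `b`, carries the sums for `-l` termwise to those for `l`, up to the
factor `q^(a-b) = q^l` in the second case.

The symmetry of the trinomial coefficient comes from the factorial formula for Gaussian binomials,
since `ℤ[q,q⁻¹]` is a domain.
-/

open LaurentPolynomial

/-- The Gaussian (q-)binomial coefficient `C(n,k)_q` as a Laurent polynomial in `q`,
defined by the q-Pascal recursion `C(n+1,k+1)_q = C(n,k)_q + q^(k+1) C(n,k+1)_q`. -/
noncomputable def qbinom : ℕ → ℕ → LaurentPolynomial ℤ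
  | _, 0 => 1
  | 0, _ + 1 => 0
  | n + 1, k + 1 => qbinom n k + T ((k : ℤ) + 1) * qbinom n (k + 1)

/-- `C(n,k)_q` for integer arguments, zero unless `0 ≤ k ≤ n`. -/
noncomputable def qbinomZ (n k : ℤ) : LaurentPolynomial ℤ :=
  if 0 ≤ k ∧ k ≤ n then qbinom n.toNat k.toNat else 0

/-- `S_{m,l}(q) = Σ_{ν∈ℤ} q^{(ν+l−m)(ν+l)+ν(ν−m)} C(m,ν)_q C(ν, m−l−ν)_q`. -/
noncomputable def Sq (m : ℕ) (l : ℤ) : LaurentPolynomial ℤ :=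
  ∑ᶠ ν : ℤ,
    T ((ν + l - m) * (ν + l) + ν * (ν - m)) * (qbinomZ m ν * qbinomZ ν (m - l - ν))

/-- `S̃_{m,l}(q) = Σ_{ν∈ℤ} q^{(ν+l−m)(ν+l−1)+ν(ν−m)} C(m,ν)_q C(ν, m−l−ν)_q`. -/
noncomputable def Sqt (m : ℕ) (l : ℤ) : LaurentPolynomial ℤ :=
  ∑ᶠ ν : ℤ,
    T ((ν + l - m) * (ν + l - 1) + ν * (ν - m)) * (qbinomZ m ν * qbinomZ ν (m - l - ν))

/-- The `q`-factorial without its denominators: `(1 - q)(1 - q²)⋯(1 - qⁿ)`. -/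
noncomputable def qfac (n : ℕ) : LaurentPolynomial ℤ :=
  ∏ i ∈ Finset.range n, (1 - T ((i : ℤ) + 1))

lemma qfac_succ (n : ℕ) : qfac (n + 1) = qfac n * (1 - T ((n : ℤ) + 1)) :=
  Finset.prod_range_succ _ _

lemma qfac_ne_zero (n : ℕ) : qfac n ≠ 0 := by
  refine Finset.prod_ne_zero_iff.mpr fun i _ h => ?_
  -- The constant coefficient of `1 - q^(i+1)` is `1`.
  have h0 := congrArg (fun p : LaurentPolynomial ℤ => p.coeff 0) h
  rw [← T_zero] at h0
  have hi : (i : ℤ) + 1 ≠ 0 := by omega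
  simp only [T, AddMonoidAlgebra.coeff_sub, AddMonoidAlgebra.coeff_single, AddMonoidAlgebra.coeff_zero,
    Finsupp.sub_apply, Finsupp.single_apply, hi] at h0
  simp at h0

lemma qbinom_zero_right (n : ℕ) : qbinom n 0 = 1 := by
  cases n <;> simp [qbinom]

lemma qbinom_eq_zero_of_lt (n : ℕ) : ∀ k, n < k → qbinom n k = 0 := by
  induction n with
  | zero =>
    rintro (_ | k) h
    · omega
    · simp [qbinom]
  | succ n ih =>
    rintro (_ | k) h
    · omega
    · rw [qbinom, ih k (by omega), ih (k + 1) (by omega)]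
      simp

/-- The factorial formula for Gaussian binomials, in division-free form. -/
lemma qbinom_mul_qfac (n : ℕ) :
    ∀ k j, k + j = n → qbinom n k * (qfac k * qfac j) = qfac n := by
  induction n with
  | zero =>
    intro k j h
    obtain ⟨rfl, rfl⟩ : k = 0 ∧ j = 0 := by omega
    simp [qbinom, qfac]
  | succ n ih =>
    rintro (_ | k) j h
    · obtain rfl : j = n + 1 := by omega
      simp [qbinom_zero_right, qfac]
    · have h1 := ih k j (by omega)
      rw [qbinom]
      rcases j with _ | j
      · obtain rfl : k = n := by omega
        rw [qbinom_eq_zero_of_lt k (k + 1) (by omega), qfac_succ]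
        linear_combination (1 - T ((k : ℤ) + 1)) * h1
      · have h2 := ih (k + 1) j (by omega)
        have hT : (T ((n : ℤ) + 1) : LaurentPolynomial ℤ)
            = T ((k : ℤ) + 1) * T ((j : ℤ) + 1) := by
          rw [← T_add]
          congr 1
          omega
        rw [qfac_succ j] at h1 ⊢
        rw [qfac_succ k] at h2 ⊢
        rw [qfac_succ n, hT]
        linear_combination (1 - T ((k : ℤ) + 1)) * h1
          + T ((k : ℤ) + 1) * (1 - T ((j : ℤ) + 1)) * h2

/-- The product of Gaussian binomials is the `q`-trinomial coefficient with parts `a, b, c`. -/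
lemma qbinom_mul_qbinom_mul_qfac (a b c : ℕ) :
    qbinom (a + b + c) (b + c) * qbinom (b + c) b * (qfac a * qfac b * qfac c)
      = qfac (a + b + c) := by
  have h1 := qbinom_mul_qfac (a + b + c) (b + c) a (by omega)
  have h2 := qbinom_mul_qfac (b + c) b c rfl
  linear_combination h1 + qbinom (a + b + c) (b + c) * qfac a * h2

lemma qbinom_mul_qbinom_symm (a b c : ℕ) :
    qbinom (a + b + c) (b + c) * qbinom (b + c) b
      = qbinom (a + b + c) (a + c) * qbinom (a + c) a := by
  have h1 := qbinom_mul_qbinom_mul_qfac a b c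
  have h2 := qbinom_mul_qbinom_mul_qfac b a c
  rw [add_comm b a] at h2
  refine mul_right_cancel₀
    (mul_ne_zero (mul_ne_zero (qfac_ne_zero a) (qfac_ne_zero b)) (qfac_ne_zero c)) ?_
  linear_combination h1 - h2

/-- Symmetry of the `q`-trinomial coefficient under exchanging `a = m - ν` and
`b = m - l - ν`; both sides vanish unless `a`, `b` and `m - a - b` are nonnegative. -/
lemma qbinomZ_mul_symm (m : ℕ) (l ν : ℤ) :
    qbinomZ m (ν + l) * qbinomZ (ν + l) (m - -l - (ν + l))
      = qbinomZ m ν * qbinomZ ν (m - l - ν) := by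
  by_cases h : 0 ≤ m - ν ∧ 0 ≤ m - l - ν ∧ 0 ≤ 2 * ν + l - m
  · obtain ⟨ha, hb, hc⟩ := h
    obtain ⟨a, ha⟩ := Int.eq_ofNat_of_zero_le ha
    obtain ⟨b, hb⟩ := Int.eq_ofNat_of_zero_le hb
    obtain ⟨c, hc⟩ := Int.eq_ofNat_of_zero_le hc
    have e1 : (m : ℤ).toNat = a + b + c := by omega
    have e2 : (ν + l).toNat = a + c := by omega
    have e3 : ((m : ℤ) - -l - (ν + l)).toNat = a := by omega
    have e4 : ν.toNat = b + c := by omega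
    have e5 : ((m : ℤ) - l - ν).toNat = b := by omega
    unfold qbinomZ
    rw [if_pos (by omega), if_pos (by omega), if_pos (by omega), if_pos (by omega),
      e1, e2, e3, e4, e5]
    exact (qbinom_mul_qbinom_symm a b c).symm
  · unfold qbinomZ
    split_ifs <;> first | omega | simp

/-- S_{m,-l}(q) = S_{m,l}(q) and St_{m,-l}(q) = q^l * St_{m,l}(q), in Z[q,q^-1]. -/
theorem S_neg_and_St_neg (m : ℕ) (l : ℤ) :
    Sq m (-l) = Sq m l ∧ Sqt m (-l) = T l * Sqt m l := by
  constructor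
  · unfold Sq
    rw [← finsum_comp_equiv (Equiv.addRight l)]
    refine finsum_congr fun ν => ?_
    simp only [Equiv.coe_addRight]
    rw [qbinomZ_mul_symm]
    congr 2
    ring
  · unfold Sqt
    rw [mul_finsum, ← finsum_comp_equiv (Equiv.addRight l)]
    · refine finsum_congr fun ν => ?_
      simp only [Equiv.coe_addRight]
      rw [qbinomZ_mul_symm, ← mul_assoc (T l), ← T_add]
      congr 2
      ring
end

section
/- For all integers m ≥ 0 and l ∈ ℤ, one has S_{m+1,l}(q) = q^{−m−l−1} S_{m,l+1}(q) + q^{−m} S̃_{m,l}(q) + S_{m,l−1}(q), an identity in ℤ[q, q⁻¹]. -/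
/-!
Two facts about Gaussian binomials carry the proof: the `q`-Pascal rule
`C(n+1,k) = C(n,k-1) + q^k C(n,k)` (`qbinomZ_succ`) and the ratio rule
`(1 - q^k) C(n,k) = (1 - q^(n-k+1)) C(n,k-1)` (`qbinomZ_ratio`).

The Pascal rule applied to `C(m+1,ν)` splits the summand of `S_{m+1,l}` into a multiple of `C(m,ν)`
and a multiple of `C(m,ν-1)`. After shifting `ν` by one in the second part, every term on either
side of the recursion carries the factor `C(m,ν)`, and the identity holds for each `ν` separately
(`term_identity`): the Pascal rule for `C(ν+1,m-l-ν)` produces the summand of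
`q^(-m-l-1) S_{m,l+1}` exactly, and what is left of the other two summands is the ratio rule
with `n = ν` and `k = m+1-l-ν`.
-/

open LaurentPolynomial

lemma qbinom_eq_zero (n k : ℕ) (h : n < k) : qbinom n k = 0 := by
  induction n generalizing k with
  | zero => cases k with
    | zero => omega
    | succ k => rfl
  | succ n ih => cases k with
    | zero => omega
    | succ k => rw [qbinom, ih k (by omega), ih (k + 1) (by omega)]; simp

lemma qbinom_ratio (n k : ℕ) :
    (1 - T ((k : ℤ) + 1)) * qbinom n (k + 1) = (1 - T ((n : ℤ) - k)) * qbinom n k := by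
  induction n generalizing k with
  | zero => cases k with
    | zero => simp [qbinom]
    | succ k => simp [qbinom]
  | succ n ih => cases k with
    | zero =>
      have h := ih 0
      simp only [qbinom, qbinom_zero_right] at h ⊢
      have e : (T ((n + 1 : ℕ) - (0 : ℕ) : ℤ) : LaurentPolynomial ℤ)
          = T ((0 : ℕ) + 1 : ℤ) * T ((n : ℤ) - (0 : ℕ)) := by
        rw [← T_add]; congr 1; push_cast; ring
      rw [e]
      linear_combination T ((0 : ℕ) + 1 : ℤ) * h
    | succ k =>
      have h1 := ih k
      have h2 := ih (k + 1)
      simp only [qbinom]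
      have e1 : (T ((n + 1 : ℕ) - (k + 1 : ℕ) : ℤ) : LaurentPolynomial ℤ) = T ((n : ℤ) - k) := by
        congr 1; push_cast; ring
      -- Both sides reduce to `(1 - q^(n+1)) C(n,k+1)`; this matches the two forms of `q^(n+1)`.
      have e2 : (T (((k + 1 : ℕ) : ℤ) + 1) * T ((n : ℤ) - (k + 1 : ℕ)) : LaurentPolynomial ℤ)
          = T ((k : ℤ) + 1) * T ((n : ℤ) - k) := by
        rw [← T_add, ← T_add]; congr 1; push_cast; ring
      rw [e1]
      linear_combination h1 + T (((k + 1 : ℕ) : ℤ) + 1) * h2 - qbinom n (k + 1) * e2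

lemma qbinomZ_of_neg {n k : ℤ} (h : k < 0) : qbinomZ n k = 0 :=
  if_neg (by omega)

lemma qbinomZ_natCast (n k : ℕ) : qbinomZ n k = qbinom n k := by
  unfold qbinomZ
  split_ifs with h
  · simp
  · exact (qbinom_eq_zero n k (by omega)).symm

lemma qbinomZ_succ (n k : ℤ) (hn : 0 ≤ n) :
    qbinomZ (n + 1) k = qbinomZ n (k - 1) + T k * qbinomZ n k := by
  lift n to ℕ using hn
  rcases lt_trichotomy k 0 with hk | rfl | hk
  · simp [qbinomZ_of_neg hk, qbinomZ_of_neg (show k - 1 < 0 by omega)]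
  · have h1 := qbinomZ_natCast (n + 1) 0
    have h2 := qbinomZ_natCast n 0
    push_cast at h1 h2
    rw [qbinomZ_of_neg (show (0 : ℤ) - 1 < 0 by omega), h1, h2]
    simp [qbinom_zero_right]
  · obtain ⟨j, rfl⟩ : ∃ j : ℕ, k = (j : ℤ) + 1 := ⟨(k - 1).toNat, by omega⟩
    have h1 := qbinomZ_natCast (n + 1) (j + 1)
    have h2 := qbinomZ_natCast n (j + 1)
    push_cast at h1 h2
    rw [add_sub_cancel_right, h1, h2, qbinomZ_natCast, qbinom]

lemma qbinomZ_ratio (n k : ℤ) :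
    (1 - T k) * qbinomZ n k = (1 - T (n - k + 1)) * qbinomZ n (k - 1) := by
  rcases lt_or_ge n 0 with hn | hn
  · have h (j : ℤ) : qbinomZ n j = 0 := if_neg (by omega)
    simp [h]
  lift n to ℕ using hn
  rcases lt_trichotomy k 0 with hk | rfl | hk
  · simp [qbinomZ_of_neg hk, qbinomZ_of_neg (show k - 1 < 0 by omega)]
  · rw [qbinomZ_of_neg (show (0 : ℤ) - 1 < 0 by omega)]; simp
  · obtain ⟨j, rfl⟩ : ∃ j : ℕ, k = (j : ℤ) + 1 := ⟨(k - 1).toNat, by omega⟩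
    have h2 := qbinomZ_natCast n (j + 1)
    push_cast at h2
    rw [add_sub_cancel_right, h2, qbinomZ_natCast, qbinom_ratio]
    congr 3; ring

/-- The recursion at a fixed `ν`. On the left are the two parts of the summand of `S_{m+1,l}` that
carry `C(m,ν)`: one from the index `ν`, the other from the index `ν + 1`. -/
lemma term_identity (m : ℕ) (l ν : ℤ) :
    T ((ν + l - (m + 1)) * (ν + l) + ν * (ν - (m + 1)) + ν)
        * (qbinomZ m ν * qbinomZ ν (m + 1 - l - ν))
      + T ((ν + 1 + l - (m + 1)) * (ν + 1 + l) + (ν + 1) * (ν + 1 - (m + 1)))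
        * (qbinomZ m ν * qbinomZ (ν + 1) (m - l - ν))
    = T (-(m : ℤ) - l - 1) * (T ((ν + (l + 1) - m) * (ν + (l + 1)) + ν * (ν - m))
        * (qbinomZ m ν * qbinomZ ν (m - (l + 1) - ν)))
      + T (-(m : ℤ)) * (T ((ν + l - m) * (ν + l - 1) + ν * (ν - m))
        * (qbinomZ m ν * qbinomZ ν (m - l - ν)))
      + T ((ν + (l - 1) - m) * (ν + (l - 1)) + ν * (ν - m))
        * (qbinomZ m ν * qbinomZ ν (m - (l - 1) - ν)) := by
  rcases lt_or_ge ν 0 with hν | hν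
  · simp [qbinomZ_of_neg hν]
  have hr := qbinomZ_ratio ν (m + 1 - l - ν)
  rw [qbinomZ_succ ν _ hν]
  rw [show (m : ℤ) + 1 - l - ν - 1 = m - l - ν by ring] at hr
  rw [show (m : ℤ) - (l + 1) - ν = m - l - ν - 1 by ring,
    show (m : ℤ) - (l - 1) - ν = m + 1 - l - ν by ring]
  -- `E` is the exponent of the `q^(-m) S̃` summand; the others are compared with it, except that
  -- the exponent of the shifted part equals that of the `q^(-m-l-1) S_{m,l+1}` summand (`e2`).
  set E : ℤ := (ν + l - m) * (ν + l - 1) + ν * (ν - m) - m with hE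
  have e1 : (ν + l - (m + 1)) * (ν + l) + ν * (ν - (m + 1)) + ν = E := by rw [hE]; ring
  have e2 : (ν + 1 + l - (m + 1)) * (ν + 1 + l) + (ν + 1) * (ν + 1 - (m + 1))
      = -(m : ℤ) - l - 1 + ((ν + (l + 1) - m) * (ν + (l + 1)) + ν * (ν - m)) := by ring
  have e3 : -(m : ℤ) - l - 1 + ((ν + (l + 1) - m) * (ν + (l + 1)) + ν * (ν - m)) + (m - l - ν)
      = E + (ν - (m + 1 - l - ν) + 1) := by rw [hE]; ring
  have e4 : (ν + (l - 1) - m) * (ν + (l - 1)) + ν * (ν - m) = E + (m + 1 - l - ν) := by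
    rw [hE]; ring
  have e5 : -(m : ℤ) + ((ν + l - m) * (ν + l - 1) + ν * (ν - m)) = E := by rw [hE]; ring
  have t3 := congrArg (T : ℤ → LaurentPolynomial ℤ) e3
  have t5 := congrArg (T : ℤ → LaurentPolynomial ℤ) e5
  rw [e1, e2, e4]
  rw [T_add _ ((m : ℤ) - l - ν), T_add (-(m : ℤ) - l - 1), T_add E] at t3
  rw [T_add (-(m : ℤ))] at t5
  rw [T_add (-(m : ℤ) - l - 1), T_add E]
  linear_combination qbinomZ m ν * T E * hr + qbinomZ m ν * qbinomZ ν (m - l - ν) * (t3 - t5)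

/-- `C(m,ν)` vanishes outside `0 ≤ ν ≤ m`, so all sums below are finite. -/
lemma finite_support_term (m : ℕ) (f g h : ℤ → LaurentPolynomial ℤ) :
    (Function.support fun ν : ℤ => f ν * (g ν * (qbinomZ m ν * h ν))).Finite := by
  refine (Set.finite_Icc (0 : ℤ) m).subset fun ν hν => ?_
  by_contra hc
  have h0 : qbinomZ m ν = 0 := if_neg hc
  simp [h0] at hν

lemma finite_support_term' (m : ℕ) (g h : ℤ → LaurentPolynomial ℤ) :
    (Function.support fun ν : ℤ => g ν * (qbinomZ m ν * h ν)).Finite := by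
  simpa using finite_support_term m (fun _ => 1) g h

/-- S_{m+1,l} = q^{-m-l-1} S_{m,l+1} + q^{-m} St_{m,l} + S_{m,l-1}. -/
theorem S_succ_rec2 (m : ℕ) (l : ℤ) :
    Sq (m + 1) l =
      T (-(m : ℤ) - l - 1) * Sq m (l + 1) + T (-(m : ℤ)) * Sqt m l + Sq m (l - 1) := by
  let a : ℤ → LaurentPolynomial ℤ := fun ν =>
    T ((ν + l - (m + 1)) * (ν + l) + ν * (ν - (m + 1)) + ν)
      * (qbinomZ m ν * qbinomZ ν (m + 1 - l - ν))
  let b : ℤ → LaurentPolynomial ℤ := fun ν =>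
    T ((ν + 1 + l - (m + 1)) * (ν + 1 + l) + (ν + 1) * (ν + 1 - (m + 1)))
      * (qbinomZ m ν * qbinomZ (ν + 1) (m - l - ν))
  have ha : (Function.support a).Finite := finite_support_term' m _ _
  have hb : (Function.support b).Finite := finite_support_term' m _ _
  have hb' : (Function.support fun ν => b (ν - 1)).Finite :=
    hb.preimage (f := fun ν : ℤ => ν - 1) (sub_left_injective.injOn)
  have hshift : ∑ᶠ ν, b (ν - 1) = ∑ᶠ ν, b ν :=
    finsum_comp_equiv (Equiv.subRight (1 : ℤ))
  have hL : Sq (m + 1) l = ∑ᶠ ν, (a ν + b ν) := by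
    rw [finsum_add_distrib ha hb, ← hshift, ← finsum_add_distrib ha hb']
    refine finsum_congr fun ν => ?_
    simp only [a, b]
    push_cast
    rw [qbinomZ_succ m ν (by positivity), sub_add_cancel,
      show (m : ℤ) - l - (ν - 1) = m + 1 - l - ν by ring, T_add _ ν]
    ring
  rw [hL]
  unfold Sq Sqt
  rw [mul_finsum, mul_finsum,
    ← finsum_add_distrib (finite_support_term m _ _ _) (finite_support_term m _ _ _),
    ← finsum_add_distrib _ (finite_support_term' m _ _)]
  · exact finsum_congr fun ν => term_identity m l ν
  · exact ((finite_support_term m _ _ _).union (finite_support_term m _ _ _)).subset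
      (Function.support_add _ _)
end

section
/- Let p, p' be relatively prime integers with 3 ≤ p < p', and suppose 3/2 < p'/p < 2. Then there is no integer s ≥ 1 with τ(s) = 2 and τ(s+1) = 2, where τ(b) = ⌊(b+1)p/p'⌋ − ⌊(b−1)p/p'⌋. -/
/-!
Put `α = p / p'`, so `α < 2/3`. Since `α < 1`, the sequence `⌊bα⌋` grows by at most one per step, so
`τ(s) = 2` forces `⌊sα⌋ ≥ ⌊(s-1)α⌋ + 1`. Then `τ(s+1) = 2` gives `⌊(s+2)α⌋ ≥ ⌊(s-1)α⌋ + 3`, which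
is impossible because the three steps from `(s-1)α` to `(s+2)α` add only `3α < 2`.
-/

/-- `τ(b) = ⌊(b+1)p/p'⌋ − ⌊(b−1)p/p'⌋`. -/
noncomputable def tau (p p' b : ℤ) : ℤ :=
  ⌊(((b + 1) * p : ℤ) : ℚ) / (p' : ℚ)⌋ - ⌊(((b - 1) * p : ℤ) : ℚ) / (p' : ℚ)⌋

/-- if `p, p'` are relatively prime, `3 ≤ p < p'` and `3/2 < p'/p < 2`, then
there is no integer `s ≥ 1` with `τ(s) = 2` and `τ(s+1) = 2`. -/
theorem no_adjacent_tau_two (p p' : ℤ) (hcop : Int.gcd p p' = 1) (hp : 3 ≤ p) (h1 : p < p')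
    (h32 : 3 * p < 2 * p') (h2 : p' < 2 * p) :
    ¬ ∃ s : ℤ, 1 ≤ s ∧ tau p p' s = 2 ∧ tau p p' (s + 1) = 2 := by
  rintro ⟨s, -, hs, hs'⟩
  have hp' : (0 : ℚ) < p' := by exact_mod_cast (by lia : 0 < p')
  have hα1 : (p : ℚ) / p' < 1 := by
    rw [div_lt_one hp']
    exact_mod_cast h1
  have hα : 3 * ((p : ℚ) / p') < 2 := by
    rw [← mul_div_assoc, div_lt_iff₀ hp']
    exact_mod_cast h32
  unfold tau at hs hs'
  push_cast at hs hs'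
  simp only [mul_div_assoc] at hs hs'
  rw [show (s : ℚ) + 1 - 1 = s by ring] at hs'
  set α : ℚ := (p : ℚ) / p'
  have hstep : ⌊((s : ℚ) + 1) * α⌋ ≤ ⌊(s : ℚ) * α⌋ + 1 := by
    rw [← Int.floor_add_one]
    apply Int.floor_le_floor
    linarith
  have hthree : ⌊((s : ℚ) + 1 + 1) * α⌋ ≤ ⌊((s : ℚ) - 1) * α⌋ + 2 := by
    rw [← Int.floor_add_ofNat]
    apply Int.floor_le_floor
    linarith
  lia
end

section
/- Let p, p' be relatively prime integers with 3 ≤ p < p' < 2p, and set τ(b) = ⌊(b+1)p/p'⌋ − ⌊(b−1)p/p'⌋. Suppose integers s ≥ 1 and k ≥ 0 satisfy τ(s) = 2, τ(s+i) = 1 for all i = 1, …, k, and τ(s+k+1) = 2. Then k is even. -/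
/-- The increments of `b ↦ ⌊b p / p'⌋` lie in `{0, 1}` when `0 ≤ p ≤ p'`. -/
lemma floor_step (p p' : ℤ) (hp : 0 ≤ p) (h1 : p ≤ p') (hp' : 0 < p') (b : ℤ) :
    ⌊((b * p : ℤ) : ℚ) / (p' : ℚ)⌋ ≤ ⌊(((b + 1) * p : ℤ) : ℚ) / (p' : ℚ)⌋ ∧
    ⌊(((b + 1) * p : ℤ) : ℚ) / (p' : ℚ)⌋ ≤ ⌊((b * p : ℤ) : ℚ) / (p' : ℚ)⌋ + 1 := by
  have hq : (0 : ℚ) < p' := by exact_mod_cast hp'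
  constructor
  · apply Int.floor_le_floor
    apply div_le_div_of_nonneg_right _ hq.le
    exact_mod_cast (by linarith : b * p ≤ (b + 1) * p)
  · rw [← Int.floor_add_one]
    apply Int.floor_le_floor
    rw [← div_self hq.ne', ← add_div]
    apply div_le_div_of_nonneg_right _ hq.le
    exact_mod_cast (by linarith : (b + 1) * p ≤ b * p + p')

/-- if `p, p'` are relatively prime with `3 ≤ p < p' < 2p`, and integers
`s ≥ 1`, `k ≥ 0` satisfy `τ(s) = 2`, `τ(s+i) = 1` for `i = 1, …, k`, and `τ(s+k+1) = 2`,
then `k` is even. -/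
theorem run_length_even (p p' : ℤ) (hcop : Int.gcd p p' = 1) (hp : 3 ≤ p) (h1 : p < p')
    (h2 : p' < 2 * p) (s k : ℤ) (hs : 1 ≤ s) (hk : 0 ≤ k)
    (hts : tau p p' s = 2)
    (hrun : ∀ i : ℤ, 1 ≤ i → i ≤ k → tau p p' (s + i) = 1)
    (htk : tau p p' (s + k + 1) = 2) :
    2 ∣ k := by
  obtain ⟨f, hf⟩ : ∃ f : ℤ → ℤ, ∀ b, f b = ⌊((b * p : ℤ) : ℚ) / (p' : ℚ)⌋ := ⟨_, fun _ => rfl⟩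
  have hstep : ∀ b, f b ≤ f (b + 1) ∧ f (b + 1) ≤ f b + 1 := fun b => by
    rw [hf, hf]
    exact floor_step p p' (by omega) h1.le (by omega) b
  have htau : ∀ b, tau p p' b = f (b + 1) - f (b - 1) := fun b => by
    rw [hf, hf, tau]
  have key : ∀ n : ℕ, (n : ℤ) ≤ k → f (s + n + 1) - f (s + n) = 1 - (n : ℤ) % 2 := by
    intro n
    induction n with
    | zero =>
      intro _
      have a := hstep s
      have b := hstep (s - 1)
      rw [htau] at hts
      simp only [sub_add_cancel] at b
      simp only [Nat.cast_zero, add_zero]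
      omega
    | succ n ih =>
      intro hn
      push_cast at hn ⊢
      have a := ih (by omega)
      have b := hrun (n + 1) (by omega) hn
      rw [htau, show s + ((n : ℤ) + 1) - 1 = s + n by ring] at b
      rw [show s + ((n : ℤ) + 1) = s + n + 1 by ring] at b ⊢
      omega
  have a := key k.toNat (by omega)
  rw [Int.toNat_of_nonneg hk] at a
  have b := hstep (s + k + 1)
  have c := hstep (s + k)
  rw [htau, show s + k + 1 - 1 = s + k by ring] at htk
  omega
end
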